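/- arXiv:2305.00754 — 2 statements merged into one kernel-verified Lean document; each statement's English description precedes it below -/
import Mathlib

section
/- Let X ∈ ℝ^{I₁×I₂} and let C = X S ∈ ℝ^{I₁×R} and R' = Pᵀ X ∈ ℝ^{R×I₂} be selections of columns and rows of X by selection matrices S, P (submatrices of identity matrices). Then the matrix U = C⁺ X R'⁺ (where ⁺ denotes Moore–Penrose pseudoinverse) minimizes the Frobenius norm ‖X − C U R'‖_F over all matrices U ∈ ℝ^{R×R}. -/
open scoped BigOperators
open Matrix

/-- The four Penrose equations characterizing the Moore-Penrose pseudoinverse. -/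
def Matrix.IsMoorePenrose {m n : Type*} [Fintype m] [Fintype n] {R : Type*}
    [Field R] [StarRing R] (A : Matrix m n R) (B : Matrix n m R) : Prop :=
  A * B * A = A ∧ B * A * B = B ∧ (A * B)ᴴ = A * B ∧ (B * A)ᴴ = B * A

/-- Frobenius norm of a real matrix. -/
noncomputable def frobNorm {a b : ℕ} (A : Matrix (Fin a) (Fin b) ℝ) : ℝ :=
  Real.sqrt (∑ i : Fin a, ∑ j : Fin b, (A i j) ^ 2)

/-!
`C C⁺` and `R'⁺ R'` are orthogonal projections, so `X ↦ C C⁺ X R'⁺ R'` is the orthogonal projection,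
for the inner product `tr (Aᴴ B)`, onto the space of matrices `C U R'`. By Pythagoras the projection
of `X` is its best approximation in that space.
-/

section MoorePenrose

variable {m n K : Type*} [Fintype m] [Fintype n] [Field K] [StarRing K]
  {A : Matrix m n K} {B : Matrix n m K}

lemma isStarProjection_mul_of_isMoorePenrose (h : A.IsMoorePenrose B) :
    IsStarProjection (A * B) where
  isIdempotentElem := by rw [IsIdempotentElem, ← Matrix.mul_assoc, h.1]
  isSelfAdjoint := h.2.2.1

lemma isMoorePenrose_symm (h : A.IsMoorePenrose B) : B.IsMoorePenrose A :=
  ⟨h.2.1, h.1, h.2.2.2, h.2.2.1⟩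

end MoorePenrose

lemma trace_conjTranspose_sub_mul_eq_zero {m n α : Type*} [Fintype m] [Fintype n]
    [CommRing α] [StarRing α] {P : Matrix m m α} {Q : Matrix n n α}
    (hP : IsStarProjection P) (hQ : IsStarProjection Q) (X Z : Matrix m n α) :
    ((X - P * X * Q)ᴴ * (P * Z * Q)).trace = 0 := by
  have residual_compression : P * (X - P * X * Q) * Q = 0 := by
    have hPP : P * P = P := hP.isIdempotentElem
    have hQQ : Q * Q = Q := hQ.isIdempotentElem
    calc P * (X - P * X * Q) * Q = P * X * Q - P * P * X * (Q * Q) := by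
          simp only [Matrix.mul_sub, Matrix.sub_mul, Matrix.mul_assoc]
      _ = 0 := by rw [hPP, hQQ, sub_self]
  have hPH : Pᴴ = P := hP.isSelfAdjoint
  have hQH : Qᴴ = Q := hQ.isSelfAdjoint
  calc ((X - P * X * Q)ᴴ * (P * Z * Q)).trace
      = (Q * ((X - P * X * Q)ᴴ * (P * Z))).trace := by
        rw [← Matrix.mul_assoc, Matrix.trace_mul_comm]
    _ = ((P * (X - P * X * Q) * Q)ᴴ * Z).trace := by
        simp only [conjTranspose_mul, hPH, hQH, Matrix.mul_assoc]
    _ = 0 := by rw [residual_compression, conjTranspose_zero, Matrix.zero_mul, trace_zero]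

section Frobenius

open scoped Matrix.Norms.Frobenius

variable {m n 𝕜 : Type*} [Fintype m] [Fintype n] [RCLike 𝕜]

lemma frobenius_norm_eq_sqrt (A : Matrix m n 𝕜) : ‖A‖ = √(∑ i, ∑ j, ‖A i j‖ ^ 2) := by
  simp only [frobenius_norm_def, Real.sqrt_eq_rpow, Real.rpow_two]

lemma frobNorm_eq_frobenius_norm {a b : ℕ} (A : Matrix (Fin a) (Fin b) ℝ) : frobNorm A = ‖A‖ := by
  simp only [frobNorm, frobenius_norm_eq_sqrt, Real.norm_eq_abs, sq_abs]

lemma frobenius_norm_sq_eq_re_trace (A : Matrix m n 𝕜) :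
    ‖A‖ ^ 2 = RCLike.re (Aᴴ * A).trace := by
  rw [frobenius_norm_eq_sqrt, Real.sq_sqrt (by positivity), Finset.sum_comm]
  simp only [trace, diag_apply, mul_apply, conjTranspose_apply, RCLike.star_def, RCLike.conj_mul,
    map_sum, ← RCLike.ofReal_pow, RCLike.ofReal_re]

lemma frobenius_norm_add_sq {A B : Matrix m n 𝕜} (h : (Aᴴ * B).trace = 0) :
    ‖A + B‖ ^ 2 = ‖A‖ ^ 2 + ‖B‖ ^ 2 := by
  have hBA : (Bᴴ * A).trace = 0 := by
    rw [← conjTranspose_conjTranspose A, ← conjTranspose_mul, trace_conjTranspose, h, star_zero]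
  simp only [frobenius_norm_sq_eq_re_trace, conjTranspose_add, Matrix.add_mul, Matrix.mul_add,
    trace_add, h, hBA, map_add, add_zero, zero_add]

lemma frobenius_norm_sub_mul_mul_le {P : Matrix m m 𝕜} {Q : Matrix n n 𝕜}
    (hP : IsStarProjection P) (hQ : IsStarProjection Q) (X Y : Matrix m n 𝕜) :
    ‖X - P * X * Q‖ ≤ ‖X - P * Y * Q‖ := by
  have decomposition : X - P * Y * Q = (X - P * X * Q) + P * (X - Y) * Q := by
    rw [Matrix.mul_sub, Matrix.sub_mul, sub_add_sub_cancel]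
  refine le_of_sq_le_sq ?_ (norm_nonneg _)
  rw [decomposition, frobenius_norm_add_sq (trace_conjTranspose_sub_mul_eq_zero hP hQ X (X - Y))]
  exact le_add_of_nonneg_right (sq_nonneg _)

theorem stmt0_general {k l : Type*} [Fintype k] [Fintype l] (X : Matrix m n 𝕜)
    {C : Matrix m k 𝕜} {Cp : Matrix k m 𝕜} {R : Matrix l n 𝕜} {Rp : Matrix n l 𝕜}
    (hC : C.IsMoorePenrose Cp) (hR : R.IsMoorePenrose Rp) (U : Matrix k l 𝕜) :
    ‖X - C * (Cp * X * Rp) * R‖ ≤ ‖X - C * U * R‖ := by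
  have optimum_eq : C * (Cp * X * Rp) * R = C * Cp * X * (Rp * R) := by
    simp only [Matrix.mul_assoc]
  have candidate_eq : C * U * R = C * Cp * (C * U * R) * (Rp * R) := by
    calc C * U * R = (C * Cp * C) * U * (R * Rp * R) := by rw [hC.1, hR.1]
      _ = C * Cp * (C * U * R) * (Rp * R) := by simp only [Matrix.mul_assoc]
  rw [optimum_eq, candidate_eq]
  exact frobenius_norm_sub_mul_mul_le (isStarProjection_mul_of_isMoorePenrose hC)
    (isStarProjection_mul_of_isMoorePenrose (isMoorePenrose_symm hR)) X (C * U * R)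

end Frobenius

/-- Optimality of the middle matrix U = C⁺ X R'⁺ in the CUR approximation. -/
theorem stmt0 {I₁ I₂ R : ℕ}
    (X : Matrix (Fin I₁) (Fin I₂) ℝ)
    (cs : Fin R → Fin I₂) (rs : Fin R → Fin I₁)
    (hcs : Function.Injective cs) (hrs : Function.Injective rs)
    (S : Matrix (Fin I₂) (Fin R) ℝ) (P : Matrix (Fin I₁) (Fin R) ℝ)
    (hS : S = fun i r => if i = cs r then 1 else 0)
    (hP : P = fun i r => if i = rs r then 1 else 0)
    (C : Matrix (Fin I₁) (Fin R) ℝ) (R' : Matrix (Fin R) (Fin I₂) ℝ)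
    (hC : C = X * S) (hR : R' = Pᵀ * X)
    (Cp : Matrix (Fin R) (Fin I₁) ℝ) (Rp : Matrix (Fin I₂) (Fin R) ℝ)
    (hCp : Matrix.IsMoorePenrose C Cp) (hRp : Matrix.IsMoorePenrose R' Rp)
    (U : Matrix (Fin R) (Fin R) ℝ) (hU : U = Cp * X * Rp) :
    ∀ U' : Matrix (Fin R) (Fin R) ℝ,
      frobNorm (X - C * U * R') ≤ frobNorm (X - C * U' * R') := by
  subst hU
  simpa only [frobNorm_eq_frobenius_norm] using stmt0_general X hCp hRp
end

section
/- Let X = L D₁ Wᵀ, Y = L D₂ Uᵀ, Z = V D₃ Wᵀ be a restricted SVD of the triplet (X, Y, Z), where L, W are invertible, U, V are orthogonal, and D₁, D₂, D₃ are diagonal with D₂ and D₃ invertible. If Y and Z are invertible, then Y⁻¹ X Z⁻¹ = U (D₂⁻¹ D₁ D₃⁻¹) Vᵀ. -/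
open scoped BigOperators
open Matrix

section

variable {m n R : Type*} [CommRing R]

theorem nonsing_inv_mul_mul_mul_cancel_left [Fintype m] [DecidableEq m]
    {L : Matrix m m R} (hL : IsUnit L) (A : Matrix m m R) (B : Matrix m n R) :
    (L * A)⁻¹ * (L * B) = A⁻¹ * B := by
  rw [Matrix.mul_inv_rev, Matrix.mul_assoc,
    nonsing_inv_mul_cancel_left _ _ ((isUnit_iff_isUnit_det L).1 hL)]

theorem mul_mul_mul_nonsing_inv_cancel_right [Fintype n] [DecidableEq n]
    {W : Matrix n n R} (hW : IsUnit W) (B : Matrix m n R) (A : Matrix n n R) :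
    B * W * (A * W)⁻¹ = B * A⁻¹ := by
  rw [Matrix.mul_inv_rev, ← Matrix.mul_assoc,
    mul_nonsing_inv_cancel_right _ _ ((isUnit_iff_isUnit_det W).1 hW)]

variable [Fintype m] [DecidableEq m] [Fintype n] [DecidableEq n]

theorem nonsing_inv_mul_mul_nonsing_inv_of_common_factors {L : Matrix m m R} {W : Matrix n n R}
    (hL : IsUnit L) (hW : IsUnit W) (A : Matrix m m R) (B : Matrix m n R) (C : Matrix n n R) :
    (L * A)⁻¹ * (L * B * W) * (C * W)⁻¹ = A⁻¹ * B * C⁻¹ := by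
  rw [← Matrix.mul_assoc, mul_mul_mul_nonsing_inv_cancel_right hW,
    nonsing_inv_mul_mul_mul_cancel_left hL]

theorem stmt6_general {X D₁ : Matrix m n R} {Y L U D₂ : Matrix m m R} {Z W V D₃ : Matrix n n R}
    (hU : Uᵀ * U = 1) (hV : Vᵀ * V = 1)
    (hX : X = L * D₁ * Wᵀ) (hY : Y = L * D₂ * Uᵀ) (hZ : Z = V * D₃ * Wᵀ)
    (hYu : IsUnit Y) (hZu : IsUnit Z) :
    Y⁻¹ * X * Z⁻¹ = U * (D₂⁻¹ * D₁ * D₃⁻¹) * Vᵀ := by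
  subst hX hY hZ
  rw [Matrix.mul_assoc L] at hYu ⊢
  have hL : IsUnit L := (IsUnit.mul_iff.1 hYu).1
  have hW : IsUnit Wᵀ := (IsUnit.mul_iff.1 hZu).2
  calc (L * (D₂ * Uᵀ))⁻¹ * (L * D₁ * Wᵀ) * (V * D₃ * Wᵀ)⁻¹
      = (D₂ * Uᵀ)⁻¹ * D₁ * (V * D₃)⁻¹ :=
        nonsing_inv_mul_mul_nonsing_inv_of_common_factors hL hW _ _ _
    _ = U * D₂⁻¹ * D₁ * (D₃⁻¹ * Vᵀ) := by
        rw [Matrix.mul_inv_rev, Matrix.mul_inv_rev, inv_eq_right_inv hU, inv_eq_left_inv hV]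
    _ = U * (D₂⁻¹ * D₁ * D₃⁻¹) * Vᵀ := by simp only [Matrix.mul_assoc]

end

/-- Restricted SVD of the triplet (X, Y, Z) gives an SVD-like factorization of
Y⁻¹ X Z⁻¹. -/
theorem stmt6 {n : ℕ} (X Y Z L W U V D₁ D₂ D₃ : Matrix (Fin n) (Fin n) ℝ)
    (hL : IsUnit L) (hW : IsUnit W)
    (hU : Uᵀ * U = 1) (hV : Vᵀ * V = 1)
    (hD1 : D₁.IsDiag) (hD2 : D₂.IsDiag) (hD3 : D₃.IsDiag)
    (hD2u : IsUnit D₂) (hD3u : IsUnit D₃)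
    (hX : X = L * D₁ * Wᵀ) (hY : Y = L * D₂ * Uᵀ) (hZ : Z = V * D₃ * Wᵀ)
    (hYu : IsUnit Y) (hZu : IsUnit Z) :
    Y⁻¹ * X * Z⁻¹ = U * (D₂⁻¹ * D₁ * D₃⁻¹) * Vᵀ :=
  stmt6_general hU hV hX hY hZ hYu hZu
end
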